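/- arXiv:1701.06677 — 2 statements merged into one kernel-verified Lean document; each statement's English description precedes it below -/
import Mathlib

section
/- For all i, j ≥ 1 one has MB^m_{(i)} ⊆ MZ^m_{(j)}. Moreover, for a ∈ MZ^m_{(r)} and any r-chain (ω₁, …, ω_r) starting from a, the element θω_r is a cocycle, its cohomology class lies in MZ^{m+1}_{(N)} for every N ≥ 1, and its class modulo MB^{m+1}_{(r)} depends only on a; consequently a ↦ ⟨θ, a⟩_r descends to a well-defined ℂ-linear map Δ_r : MH^m_{(r)} → MH^{m+1}_{(r)} of degree 1. -/
namespace Massey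

variable (N : ℤ → Type) [∀ k, AddCommGroup (N k)] [∀ k, Module ℂ (N k)]
variable (d θ : ∀ i j : ℤ, N i →ₗ[ℂ] N j)

/-- The cocycles in degree `m`. -/
noncomputable abbrev Z (m : ℤ) : Submodule ℂ (N m) := LinearMap.ker (d m (m + 1))

/-- The coboundaries in degree `m`, as a submodule of the cocycles. -/
noncomputable abbrev Bsub (m : ℤ) : Submodule ℂ (Z N d m) :=
  (LinearMap.range (d (m - 1) m)).comap (Z N d m).subtype

/-- The cohomology `H^m(N*) = Z^m / B^m`. -/
noncomputable abbrev Hcoh (m : ℤ) := Z N d m ⧸ Bsub N d m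

/-- The cohomology class of a cocycle. -/
noncomputable def cl (m : ℤ) (x : N m) (hx : d m (m + 1) x = 0) : Hcoh N d m :=
  Submodule.Quotient.mk ⟨x, LinearMap.mem_ker.mpr hx⟩

/-- `ω` is an `r`-chain: `d ω₀ = 0` and `d ω_{i+1} = θ ω_i`. -/
def IsChain (m : ℤ) (r : ℕ) (ω : Fin r → N m) : Prop :=
  (∀ h0 : 0 < r, d m (m + 1) (ω ⟨0, h0⟩) = 0) ∧
  ∀ (i : ℕ) (h : i + 1 < r), d m (m + 1) (ω ⟨i + 1, h⟩) = θ m (m + 1) (ω ⟨i, by omega⟩)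

/-- `MZ^m_{(r)}`: classes in `H^m` admitting an `r`-chain starting from them. -/
def MZset (m : ℤ) (r : ℕ) : Set (Hcoh N d m) :=
  {a | ∃ (h0 : 0 < r) (ω : Fin r → N m) (hc : IsChain N d θ m r ω),
    a = cl N d m (ω ⟨0, h0⟩) (hc.1 h0)}

/-- `MB^m_{(r)}`: classes in `H^m` of the cocycles `θ ω_{r-1}` over all
`(r-1)`-chains `ω` (in degree `m - 1`). -/
def MBset (m : ℤ) (r : ℕ) : Set (Hcoh N d m) :=
  {b | ∃ (hr : 0 < r - 1) (ω : Fin (r - 1) → N (m - 1))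
    (_hc : IsChain N d θ (m - 1) (r - 1) ω)
    (hz : d m (m + 1) (θ (m - 1) m (ω ⟨r - 1 - 1, by omega⟩)) = 0),
    b = cl N d m (θ (m - 1) m (ω ⟨r - 1 - 1, by omega⟩)) hz}

/-- `MZ^m_{(r)}` as a submodule (it is a linear subspace, cf. the theorem). -/
noncomputable def MZsub (m : ℤ) (r : ℕ) : Submodule ℂ (Hcoh N d m) :=
  Submodule.span ℂ (MZset N d θ m r)

/-- `MB^m_{(r)}` as a submodule (it is a linear subspace, cf. the theorem). -/
noncomputable def MBsub (m : ℤ) (r : ℕ) : Submodule ℂ (Hcoh N d m) :=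
  Submodule.span ℂ (MBset N d θ m r)

/-- `MH^m_{(r)} = MZ^m_{(r)} / MB^m_{(r)}`. -/
noncomputable abbrev MH (m : ℤ) (r : ℕ) :=
  MZsub N d θ m r ⧸ (MBsub N d θ m r).comap (MZsub N d θ m r).subtype

/-!
All `r`-chains in degree `m` form a vector space, and both `ω ↦ [ω₁]` and `ω ↦ [θ ω_r]` are linear
on it; their images are `MZ^m_{(r)}` and `MB^{m+1}_{(r+1)}`. Two constructions of chains give
everything else. If `dx = 0` and `θx = 0`, then `(x, 0, …, 0)` is a chain of every length, and its
Massey product vanishes; as `θθ = 0`, this applies to every cocycle `x = θy`. If a chain `ω` starts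
with a coboundary `ω₁ = dξ`, then `(ω₂ + θξ, ω₃, …, ω_r)` is a chain with the same Massey product
as `ω`, which therefore lies in `MB_{(r)}`; when `r = 1` the product `[θdξ] = -[dθξ]` vanishes.
-/

variable {N d θ}

theorem cl_eq_zero_iff {i j : ℤ} (hij : i + 1 = j) {x : N j} (hx : d j (j + 1) x = 0) :
    cl N d j x hx = 0 ↔ ∃ ξ : N i, d i j ξ = x := by
  obtain rfl : i = j - 1 := by omega
  simp [cl, Submodule.Quotient.mk_eq_zero]

variable (N d θ) in
/-- The vector space of `r`-chains in degree `m`, the common domain of `ω ↦ [ω₁]` and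
`ω ↦ [θ ω_r]`. -/
def chains (m : ℤ) (r : ℕ) : Submodule ℂ (Fin r → N m) where
  carrier := {ω | IsChain N d θ m r ω}
  zero_mem' := ⟨fun _ => map_zero _, fun _ _ => by simp⟩
  add_mem' hω hη :=
    ⟨fun h0 => by simp [hω.1 h0, hη.1 h0], fun i hi => by simp [hω.2 i hi, hη.2 i hi]⟩
  smul_mem' c _ hω := ⟨fun h0 => by simp [hω.1 h0], fun i hi => by simp [hω.2 i hi]⟩

variable (N d θ) in
/-- The class `[ω₁]` from which a chain starts. Chains have length `k + 1` so that a first term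
exists. -/
noncomputable def chainClass (m : ℤ) (k : ℕ) : chains N d θ m (k + 1) →ₗ[ℂ] Hcoh N d m :=
  (Bsub N d m).mkQ ∘ₗ
    (LinearMap.proj 0 ∘ₗ (chains N d θ m (k + 1)).subtype).codRestrict (Z N d m)
      fun ω => ω.2.1 k.succ_pos

theorem MZset_eq_range_chainClass (m : ℤ) (k : ℕ) :
    MZset N d θ m (k + 1) = LinearMap.range (chainClass N d θ m k) := by
  ext a
  constructor
  · rintro ⟨_, ω, hω, rfl⟩
    exact ⟨⟨ω, hω⟩, rfl⟩
  · rintro ⟨ω, rfl⟩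
    exact ⟨k.succ_pos, ω, ω.2, rfl⟩

theorem MZsub_eq_range_chainClass (m : ℤ) (k : ℕ) :
    MZsub N d θ m (k + 1) = LinearMap.range (chainClass N d θ m k) := by
  rw [MZsub, MZset_eq_range_chainClass, Submodule.span_eq]

theorem coe_MZsub (m : ℤ) {r : ℕ} (hr : 1 ≤ r) :
    (MZsub N d θ m r : Set (Hcoh N d m)) = MZset N d θ m r := by
  obtain ⟨k, rfl⟩ := Nat.exists_eq_add_of_le' hr
  rw [MZsub_eq_range_chainClass, MZset_eq_range_chainClass]

theorem chainClass_mem_MZsub {m : ℤ} {k : ℕ} (ω : chains N d θ m (k + 1)) :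
    chainClass N d θ m k ω ∈ MZsub N d θ m (k + 1) :=
  MZsub_eq_range_chainClass (θ := θ) m k ▸ LinearMap.mem_range_self _ ω

theorem theta_single_eq_zero {i j : ℤ} {k : ℕ} {x : N i} (hθx : θ i j x = 0)
    (s : Fin (k + 1)) :
    θ i j ((Pi.single 0 x : Fin (k + 1) → N i) s) = 0 := by
  rcases eq_or_ne s 0 with rfl | hs
  · rwa [Pi.single_eq_same]
  · rw [Pi.single_eq_of_ne hs, map_zero]

theorem isChain_single {m : ℤ} (k : ℕ) {x : N m} (hx : d m (m + 1) x = 0)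
    (hθx : θ m (m + 1) x = 0) :
    IsChain N d θ m (k + 1) (Pi.single 0 x) := by
  refine ⟨fun _ => hx, fun i hi => ?_⟩
  rw [theta_single_eq_zero hθx, Pi.single_eq_of_ne (by simp [Fin.ext_iff]), map_zero]

theorem cl_mem_MZset_of_theta_eq_zero {m : ℤ} {r : ℕ} (hr : 1 ≤ r) {x : N m}
    (hx : d m (m + 1) x = 0) (hθx : θ m (m + 1) x = 0) :
    cl N d m x hx ∈ MZset N d θ m r := by
  obtain ⟨k, rfl⟩ := Nat.exists_eq_add_of_le' hr
  exact ⟨hr, _, isChain_single k hx hθx, rfl⟩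

theorem theta_theta_apply (hθθ : ∀ i j l : ℤ, (θ j l).comp (θ i j) = 0) (i j l : ℤ) (x : N i) :
    θ j l (θ i j x) = 0 :=
  LinearMap.congr_fun (hθθ i j l) x

theorem d_theta_apply (hθd : ∀ i j l : ℤ, (θ j l).comp (d i j) = -((d j l).comp (θ i j)))
    (i j l : ℤ) (x : N i) : d j l (θ i j x) = -θ j l (d i j x) := by
  rw [← LinearMap.comp_apply (θ j l), hθd, LinearMap.neg_apply, neg_neg, LinearMap.comp_apply]

theorem IsChain.d_theta_last_eq_zero
    (hθd : ∀ i j l : ℤ, (θ j l).comp (d i j) = -((d j l).comp (θ i j)))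
    (hθθ : ∀ i j l : ℤ, (θ j l).comp (θ i j) = 0) {i j : ℤ} (hij : i + 1 = j) {k : ℕ}
    {ω : Fin (k + 1) → N i} (hω : IsChain N d θ i (k + 1) ω) :
    d j (j + 1) (θ i j (ω (Fin.last k))) = 0 := by
  subst hij
  suffices θ (i + 1) (i + 1 + 1) (d i (i + 1) (ω (Fin.last k))) = 0 by
    rw [d_theta_apply hθd, this, neg_zero]
  cases k with
  | zero => exact (congrArg _ (hω.1 Nat.one_pos)).trans (map_zero _)
  | succ k => exact (congrArg _ (hω.2 k (Nat.lt_succ_self _))).trans (theta_theta_apply hθθ ..)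

theorem theta_tail_add_single (hθθ : ∀ i j l : ℤ, (θ j l).comp (θ i j) = 0) {l i j : ℤ} {k : ℕ}
    (ω : Fin (k + 2) → N i) (ξ : N l) (s : Fin (k + 1)) :
    θ i j ((Fin.tail ω + Pi.single 0 (θ l i ξ) : Fin (k + 1) → N i) s) = θ i j (ω s.succ) := by
  rw [Pi.add_apply, map_add, theta_single_eq_zero (theta_theta_apply hθθ ..), add_zero]
  rfl

theorem IsChain.tail_add_single
    (hθd : ∀ i j l : ℤ, (θ j l).comp (d i j) = -((d j l).comp (θ i j)))
    (hθθ : ∀ i j l : ℤ, (θ j l).comp (θ i j) = 0) {l m : ℤ} {k : ℕ}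
    {ω : Fin (k + 2) → N m} (hω : IsChain N d θ m (k + 2) ω) {ξ : N l} (hξ : d l m ξ = ω 0) :
    IsChain N d θ m (k + 1) (Fin.tail ω + Pi.single 0 (θ l m ξ)) := by
  constructor
  · intro _
    have hω₁ : d m (m + 1) (Fin.tail ω 0) = θ m (m + 1) (ω 0) := hω.2 0 (by omega)
    change d m (m + 1) (Fin.tail ω 0 + (Pi.single 0 (θ l m ξ) : Fin (k + 1) → N m) 0) = 0
    rw [Pi.single_eq_same, map_add, hω₁, d_theta_apply hθd, hξ, add_neg_cancel]
  · intro i hi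
    rw [theta_tail_add_single hθθ, Pi.add_apply, Pi.single_eq_of_ne (by simp [Fin.ext_iff]),
      add_zero]
    exact hω.2 (i + 1) (by omega)

section MasseyProduct

variable (hθd : ∀ i j l : ℤ, (θ j l).comp (d i j) = -((d j l).comp (θ i j)))
variable (hθθ : ∀ i j l : ℤ, (θ j l).comp (θ i j) = 0)

/-- The class `[θ ω_r]` in degree `j` attached to a chain of length `r = k + 1` in degree `i`; it
represents the Massey product `⟨θ, [ω₁]⟩_r`. The target degree is a variable `j` with `i + 1 = j`
so that the map serves both for `m → m + 1` and for `m - 1 → m`. -/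
noncomputable def masseyProduct {i j : ℤ} (hij : i + 1 = j) (k : ℕ) :
    chains N d θ i (k + 1) →ₗ[ℂ] Hcoh N d j :=
  (Bsub N d j).mkQ ∘ₗ
    (θ i j ∘ₗ LinearMap.proj (φ := fun _ => N i) (Fin.last k) ∘ₗ
      (chains N d θ i (k + 1)).subtype).codRestrict (Z N d j)
        fun ω => IsChain.d_theta_last_eq_zero hθd hθθ hij ω.2

theorem masseyProduct_eq_of_theta_last_eq {i j : ℤ} (hij : i + 1 = j) {k l : ℕ}
    {ω : chains N d θ i (k + 1)} {η : chains N d θ i (l + 1)}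
    (h : θ i j (ω.1 (Fin.last k)) = θ i j (η.1 (Fin.last l))) :
    masseyProduct hθd hθθ hij k ω = masseyProduct hθd hθθ hij l η :=
  congrArg (Bsub N d j).mkQ (Subtype.ext h)

theorem MBset_eq_range_masseyProduct {i j : ℤ} (hij : i + 1 = j) (k : ℕ) :
    MBset N d θ j (k + 2) = LinearMap.range (masseyProduct hθd hθθ hij k) := by
  obtain rfl : i = j - 1 := by omega
  ext b
  constructor
  · rintro ⟨_, ω, hω, _, rfl⟩
    exact ⟨⟨ω, hω⟩, rfl⟩
  · rintro ⟨ω, rfl⟩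
    exact ⟨k.succ_pos, ω.1, ω.2, IsChain.d_theta_last_eq_zero hθd hθθ hij ω.2, rfl⟩

theorem MBsub_eq_range_masseyProduct {i j : ℤ} (hij : i + 1 = j) (k : ℕ) :
    MBsub N d θ j (k + 2) = LinearMap.range (masseyProduct hθd hθθ hij k) := by
  rw [MBsub, MBset_eq_range_masseyProduct hθd hθθ hij, Submodule.span_eq]

theorem masseyProduct_mem_MZsub {i j : ℤ} (hij : i + 1 = j) {k : ℕ}
    (ω : chains N d θ i (k + 1)) :
    masseyProduct hθd hθθ hij k ω ∈ MZsub N d θ j (k + 1) :=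
  Submodule.subset_span <| cl_mem_MZset_of_theta_eq_zero k.succ_pos
    (IsChain.d_theta_last_eq_zero hθd hθθ hij ω.2) (theta_theta_apply hθθ ..)

theorem masseyProduct_mem_MBsub_of_chainClass_eq_zero {i j : ℤ} (hij : i + 1 = j) {k : ℕ}
    {ω : chains N d θ i (k + 1)} (hω : chainClass N d θ i k ω = 0) :
    masseyProduct hθd hθθ hij k ω ∈ MBsub N d θ j (k + 1) := by
  obtain ⟨ξ, hξ⟩ := (cl_eq_zero_iff (sub_add_cancel i 1) (ω.2.1 k.succ_pos)).1 hω
  cases k with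
  | zero =>
    have hexact : d i j (-θ (i - 1) i ξ) = θ i j (ω.1 0) := by
      rw [map_neg, d_theta_apply hθd, neg_neg, hξ]
      rfl
    have hzero : masseyProduct hθd hθθ hij 0 ω = 0 :=
      (cl_eq_zero_iff hij (IsChain.d_theta_last_eq_zero hθd hθθ hij ω.2)).2 ⟨_, hexact⟩
    exact hzero ▸ Submodule.zero_mem _
  | succ k =>
    rw [MBsub_eq_range_masseyProduct hθd hθθ hij]
    refine ⟨⟨_, IsChain.tail_add_single hθd hθθ ω.2 hξ⟩,
      masseyProduct_eq_of_theta_last_eq hθd hθθ hij ?_⟩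
    exact theta_tail_add_single hθθ ω.1 ξ (Fin.last k)

theorem masseyProduct_sub_mem_MBsub {i j : ℤ} (hij : i + 1 = j) {k : ℕ}
    {ω η : chains N d θ i (k + 1)} (h : chainClass N d θ i k ω = chainClass N d θ i k η) :
    masseyProduct hθd hθθ hij k ω - masseyProduct hθd hθθ hij k η ∈ MBsub N d θ j (k + 1) := by
  rw [← map_sub]
  apply masseyProduct_mem_MBsub_of_chainClass_eq_zero
  rw [map_sub, h, sub_self]

theorem MBsub_le_map_ker_masseyProduct {i j : ℤ} (hij : i + 1 = j) (r k : ℕ) :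
    MBsub N d θ i r ≤
      (LinearMap.ker (masseyProduct hθd hθθ hij k)).map (chainClass N d θ i k) := by
  subst hij
  refine Submodule.span_le.2 ?_
  rintro _ ⟨_, ω, _, hz, rfl⟩
  have hθθω := theta_theta_apply hθθ (i - 1) i (i + 1) (ω ⟨r - 1 - 1, by omega⟩)
  refine ⟨⟨_, isChain_single k hz hθθω⟩, ?_, rfl⟩
  have hlast := (theta_single_eq_zero hθθω (Fin.last k)).trans (map_zero (θ i (i + 1))).symm
  have hprod := masseyProduct_eq_of_theta_last_eq hθd hθθ rfl (l := k) (η := 0)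
    (ω := ⟨_, isChain_single k hz hθθω⟩) hlast
  exact hprod.trans (map_zero _)

theorem masseyProduct_mem_MBsub {i j : ℤ} (hij : i + 1 = j) {k : ℕ}
    {ω : chains N d θ i (k + 1)} (hω : chainClass N d θ i k ω ∈ MBsub N d θ i (k + 1)) :
    masseyProduct hθd hθθ hij k ω ∈ MBsub N d θ j (k + 1) := by
  obtain ⟨η, hη, hηω⟩ := MBsub_le_map_ker_masseyProduct hθd hθθ hij (k + 1) k hω
  have hsub := masseyProduct_sub_mem_MBsub hθd hθθ hij hηω.symm
  rwa [LinearMap.mem_ker.1 hη, sub_zero] at hsub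

variable (N d θ) in
/-- The class of `[ω₁]` in `MH^m_{(r)}`, where `r = k + 1`: the surjection through which `Δ_r` is
defined. -/
noncomputable def chainClassMH (m : ℤ) (k : ℕ) : chains N d θ m (k + 1) →ₗ[ℂ] MH N d θ m (k + 1) :=
  Submodule.mkQ _ ∘ₗ (chainClass N d θ m k).codRestrict _ chainClass_mem_MZsub

/-- The class of `[θ ω_r]` in `MH^j_{(r)}`, where `r = k + 1`: the value of `Δ_r` at the start of
`ω`. -/
noncomputable def masseyProductMH {i j : ℤ} (hij : i + 1 = j) (k : ℕ) :
    chains N d θ i (k + 1) →ₗ[ℂ] MH N d θ j (k + 1) :=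
  Submodule.mkQ _ ∘ₗ
    (masseyProduct hθd hθθ hij k).codRestrict _ (masseyProduct_mem_MZsub hθd hθθ hij)

theorem chainClassMH_surjective (m : ℤ) (k : ℕ) :
    Function.Surjective (chainClassMH N d θ m k) := by
  refine (Submodule.mkQ_surjective _).comp ?_
  rintro ⟨a, ha⟩
  obtain ⟨ω, rfl⟩ := MZsub_eq_range_chainClass (θ := θ) m k ▸ ha
  exact ⟨ω, rfl⟩

theorem ker_chainClassMH_le_ker_masseyProductMH {i j : ℤ} (hij : i + 1 = j) (k : ℕ) :
    LinearMap.ker (chainClassMH N d θ i k) ≤ LinearMap.ker (masseyProductMH hθd hθθ hij k) := by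
  intro ω hω
  have hMB := (Submodule.Quotient.mk_eq_zero _).1 (LinearMap.mem_ker.1 hω)
  exact (Submodule.Quotient.mk_eq_zero _).2 (masseyProduct_mem_MBsub hθd hθθ hij hMB)

/-- The map `Δ_r : MH^i_{(r)} → MH^j_{(r)}`, `a ↦ ⟨θ, a⟩_r`, for `r = k + 1`: the factorization of
`masseyProductMH` through the surjection `chainClassMH`. -/
noncomputable def masseyDifferential {i j : ℤ} (hij : i + 1 = j) (k : ℕ) :
    MH N d θ i (k + 1) →ₗ[ℂ] MH N d θ j (k + 1) :=
  (LinearMap.ker (chainClassMH N d θ i k)).liftQ (masseyProductMH hθd hθθ hij k)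
      (ker_chainClassMH_le_ker_masseyProductMH hθd hθθ hij k) ∘ₗ
    ((chainClassMH N d θ i k).quotKerEquivOfSurjective (chainClassMH_surjective i k)).symm

theorem masseyDifferential_chainClassMH {i j : ℤ} (hij : i + 1 = j) {k : ℕ}
    (ω : chains N d θ i (k + 1)) :
    masseyDifferential hθd hθθ hij k (chainClassMH N d θ i k ω) =
      masseyProductMH hθd hθθ hij k ω := by
  rw [masseyDifferential, LinearMap.comp_apply, LinearEquiv.coe_coe,
    LinearMap.quotKerEquivOfSurjective_symm_apply, Submodule.liftQ_apply]

end MasseyProduct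

theorem coe_MBsub (hθd : ∀ i j l : ℤ, (θ j l).comp (d i j) = -((d j l).comp (θ i j)))
    (hθθ : ∀ i j l : ℤ, (θ j l).comp (θ i j) = 0) (m : ℤ) {r : ℕ} (hr : 2 ≤ r) :
    (MBsub N d θ m r : Set (Hcoh N d m)) = MBset N d θ m r := by
  obtain ⟨k, rfl⟩ := Nat.exists_eq_add_of_le' hr
  have hm := sub_add_cancel m 1
  rw [MBsub_eq_range_masseyProduct hθd hθθ hm, MBset_eq_range_masseyProduct hθd hθθ hm]

variable (N d θ)

/-- Let `(N*, d)` be a cochain complex of complex vector spaces and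
`θ` a degree-one map with `θd = -dθ` and `θθ = 0` (both given by components `d i j`,
`θ i j` vanishing unless `j = i + 1`).  Then:
(a) `MB^m_{(i)} ⊆ MZ^m_{(j)}` for all `i, j ≥ 1`;
(b) `MZ^m_{(r)}` (for `r ≥ 1`) and `MB^m_{(r)}` (for `r ≥ 2`) are linear subspaces of
`H^m(N*)`;
(c) for `a ∈ MZ^m_{(r)}` and any `r`-chain `ω` starting from `a`, the element `θ ω_r`
is a cocycle;
(d) its class lies in `MZ^{m+1}_{(N)}` for every `N ≥ 1`;
(e) its class modulo `MB^{m+1}_{(r)}` depends only on `a`;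
(f) consequently `a ↦ ⟨θ, a⟩_r` descends to a well-defined `ℂ`-linear map
`Δ_r : MH^m_{(r)} → MH^{m+1}_{(r)}` of degree `1`. -/
theorem massey_products_well_defined
    (hd : ∀ i j : ℤ, j ≠ i + 1 → d i j = 0)
    (hθ : ∀ i j : ℤ, j ≠ i + 1 → θ i j = 0)
    (hdd : ∀ i j l : ℤ, (d j l).comp (d i j) = 0)
    (hθd : ∀ i j l : ℤ, (θ j l).comp (d i j) = -((d j l).comp (θ i j)))
    (hθθ : ∀ i j l : ℤ, (θ j l).comp (θ i j) = 0) :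
    -- (a)
    (∀ (m : ℤ) (i j : ℕ), 1 ≤ i → 1 ≤ j → MBset N d θ m i ⊆ MZset N d θ m j) ∧
    -- (b)
    (∀ (m : ℤ) (r : ℕ), 1 ≤ r → (MZsub N d θ m r : Set (Hcoh N d m)) = MZset N d θ m r) ∧
    (∀ (m : ℤ) (r : ℕ), 2 ≤ r → (MBsub N d θ m r : Set (Hcoh N d m)) = MBset N d θ m r) ∧
    -- (c)
    (∀ (m : ℤ) (r : ℕ) (hr : 0 < r) (ω : Fin r → N m), IsChain N d θ m r ω →
      d (m + 1) (m + 1 + 1) (θ m (m + 1) (ω ⟨r - 1, by omega⟩)) = 0) ∧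
    -- (d)
    (∀ (m : ℤ) (r : ℕ) (hr : 0 < r) (ω : Fin r → N m), IsChain N d θ m r ω →
      ∀ (NN : ℕ), 1 ≤ NN →
      ∀ hz : d (m + 1) (m + 1 + 1) (θ m (m + 1) (ω ⟨r - 1, by omega⟩)) = 0,
        cl N d (m + 1) (θ m (m + 1) (ω ⟨r - 1, by omega⟩)) hz ∈ MZset N d θ (m + 1) NN) ∧
    -- (e)
    (∀ (m : ℤ) (r : ℕ) (hr : 0 < r) (ω ω' : Fin r → N m)
      (hc : IsChain N d θ m r ω) (hc' : IsChain N d θ m r ω'),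
      cl N d m (ω ⟨0, hr⟩) (hc.1 hr) = cl N d m (ω' ⟨0, hr⟩) (hc'.1 hr) →
      ∀ (hz : d (m + 1) (m + 1 + 1) (θ m (m + 1) (ω ⟨r - 1, by omega⟩)) = 0)
        (hz' : d (m + 1) (m + 1 + 1) (θ m (m + 1) (ω' ⟨r - 1, by omega⟩)) = 0),
        cl N d (m + 1) (θ m (m + 1) (ω ⟨r - 1, by omega⟩)) hz -
          cl N d (m + 1) (θ m (m + 1) (ω' ⟨r - 1, by omega⟩)) hz' ∈
            MBsub N d θ (m + 1) r) ∧
    -- (f)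
    (∀ (m : ℤ) (r : ℕ), 1 ≤ r →
      ∃ Δ : MH N d θ m r →ₗ[ℂ] MH N d θ (m + 1) r,
        ∀ (a : Hcoh N d m) (ha : a ∈ MZsub N d θ m r)
          (hr : 0 < r) (ω : Fin r → N m) (hc : IsChain N d θ m r ω),
          a = cl N d m (ω ⟨0, hr⟩) (hc.1 hr) →
          ∀ (b : Hcoh N d (m + 1)) (hb : b ∈ MZsub N d θ (m + 1) r)
            (hz : d (m + 1) (m + 1 + 1) (θ m (m + 1) (ω ⟨r - 1, by omega⟩)) = 0),
            b = cl N d (m + 1) (θ m (m + 1) (ω ⟨r - 1, by omega⟩)) hz →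
            Δ (Submodule.Quotient.mk ⟨a, ha⟩) = Submodule.Quotient.mk ⟨b, hb⟩) := by
  refine ⟨?_, fun m _ => coe_MZsub m, fun m _ => coe_MBsub hθd hθθ m, ?_, ?_, ?_, ?_⟩
  · rintro m _ j - hj _ ⟨_, ω, _, hz, rfl⟩
    exact cl_mem_MZset_of_theta_eq_zero hj hz (theta_theta_apply hθθ ..)
  · intro m r hr ω hω
    obtain ⟨k, rfl⟩ := Nat.exists_eq_add_of_le' hr
    exact hω.d_theta_last_eq_zero hθd hθθ rfl
  · intro m r hr ω _ s hs hz
    exact cl_mem_MZset_of_theta_eq_zero hs hz (theta_theta_apply hθθ ..)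
  · intro m r hr ω ω' hω hω' hstart _ _
    obtain ⟨k, rfl⟩ := Nat.exists_eq_add_of_le' hr
    exact masseyProduct_sub_mem_MBsub hθd hθθ rfl (ω := ⟨ω, hω⟩) (η := ⟨ω', hω'⟩) hstart
  · intro m r hr
    obtain ⟨k, rfl⟩ := Nat.exists_eq_add_of_le' hr
    refine ⟨masseyDifferential hθd hθθ rfl k, ?_⟩
    rintro _ _ _ ω hω rfl _ _ _ rfl
    exact masseyDifferential_chainClassMH hθd hθθ rfl ⟨ω, hω⟩

end Massey
end

section
/- Let (D, E, i, j, l) be a graded exact couple of complex vector spaces: D = ⊕_{k∈ℤ} D^k and E = ⊕_{k∈ℤ} E^k are graded vector spaces, i : D → D and l : E → D are linear maps of degree 0, j : D → E is a linear map of degree 1, and Im i = Ker j, Im j = Ker l, Im l = Ker i. Fix k and suppose D^k = A ⊕ B where A and B are i-invariant subspaces, the restriction of i to A is nilpotent with i^m(A) = 0, and the restriction of i to B is injective. Then the spectral sequence induced by the exact couple degenerates in degree k at sheet m+1; concretely, for every r ≥ m, every x ∈ E^k with l(x) ∈ Im(i^r), and every y ∈ D^k with i^r(y) = l(x), one has l(x)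 = 0, y ∈ Ker(i^r), and hence j(y) ∈ j(Ker(i^r)) (so all differentials d_{r+1} emanating from degree k vanish). -/
/-!
For `r ≥ m` the map `i ^ r` kills `A`, so its image lies in the `i`-invariant complement `B`, on
which `i` is injective. Hence `Im (i ^ r) ∩ Ker i = 0`, and `l x = i ^ r y` lies in this
intersection because `i ∘ l = 0`.
-/

section Endomorphism

variable {R M : Type*} [Semiring R] [AddCommMonoid M] [Module R M]
  {f : Module.End R M} {A B : Submodule R M} {m r : ℕ}

theorem range_pow_le_of_codisjoint (hAB : Codisjoint A B) (hA : A ≤ LinearMap.ker (f ^ r))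
    (hB : B ∈ f.invtSubmodule) : LinearMap.range (f ^ r) ≤ B := by
  have hmapA : A.map (f ^ r) = ⊥ := LinearMap.le_ker_iff_map.mp hA
  have hmapB : B.map (f ^ r) ≤ B :=
    Submodule.map_le_iff_le_comap.mpr (B.le_comap_pow_of_le_comap hB r)
  rwa [LinearMap.range_eq_map, ← hAB.eq_top, Submodule.map_sup, hmapA, bot_sup_eq]

theorem disjoint_range_pow_ker_of_codisjoint (hAB : Codisjoint A B)
    (hA : A ≤ LinearMap.ker (f ^ m)) (hB : B ∈ f.invtSubmodule)
    (hinj : Disjoint B (LinearMap.ker f)) (hmr : m ≤ r) :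
    Disjoint (LinearMap.range (f ^ r)) (LinearMap.ker f) :=
  have hAr : A ≤ LinearMap.ker (f ^ r) := hA.trans (f.iterateKer.monotone hmr)
  hinj.mono_left (range_pow_le_of_codisjoint hAB hAr hB)

end Endomorphism

theorem exact_couple_degeneration_general {R D E F : Type*} [Semiring R]
    [AddCommMonoid D] [Module R D] [AddCommMonoid E] [Module R E] [AddCommMonoid F] [Module R F]
    {i : Module.End R D} (j : D →ₗ[R] F) {l : E →ₗ[R] D} (hli : i ∘ₗ l = 0)
    {m r : ℕ} {A B : Submodule R D} (hAB : Codisjoint A B)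
    (hA : A ≤ LinearMap.ker (i ^ m)) (hB : B ∈ i.invtSubmodule)
    (hinj : Disjoint B (LinearMap.ker i)) (hmr : m ≤ r) {x : E} {y : D} (hxy : (i ^ r) y = l x) :
    l x = 0 ∧ (i ^ r) y = 0 ∧ j y ∈ (LinearMap.ker (i ^ r)).map j := by
  have hdisj : Disjoint (LinearMap.range (i ^ r)) (LinearMap.ker i) :=
    disjoint_range_pow_ker_of_codisjoint hAB hA hB hinj hmr
  have hlx : l x = 0 :=
    Submodule.disjoint_def.mp hdisj (l x) ⟨y, hxy⟩ (LinearMap.congr_fun hli x)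
  have hy : (i ^ r) y = 0 := hxy.trans hlx
  exact ⟨hlx, hy, Submodule.mem_map_of_mem hy⟩

/-- Let `(D, E, i, j, l)` be a graded exact couple of complex vector
spaces with `deg i = deg l = 0`, `deg j = 1`.  Fix a degree `k` and suppose
`D^k = A ⊕ B` with `A`, `B` invariant under `i`, `i` nilpotent on `A` with `i^m(A)=0`
and `i` injective on `B`.  Then the induced spectral sequence degenerates at sheet
`m+1` in degree `k`: for every `r ≥ m`, every `x ∈ E^k` with `l x ∈ Im (i^r)` and
every `y` with `i^r y = l x`, one has `l x = 0`, `y ∈ Ker (i^r)`, and hence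
`j y ∈ j (Ker (i^r))`. -/
theorem exact_couple_degeneration
    (D E : ℤ → Type*) [∀ k, AddCommGroup (D k)] [∀ k, Module ℂ (D k)]
    [∀ k, AddCommGroup (E k)] [∀ k, Module ℂ (E k)]
    (i : ∀ k, D k →ₗ[ℂ] D k) (j : ∀ k, D k →ₗ[ℂ] E (k + 1)) (l : ∀ k, E k →ₗ[ℂ] D k)
    (hij : ∀ k, LinearMap.range (i k) = LinearMap.ker (j k))
    (hjl : ∀ k, LinearMap.range (j k) = LinearMap.ker (l (k + 1)))
    (hli : ∀ k, LinearMap.range (l k) = LinearMap.ker (i k))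
    (k : ℤ) (m : ℕ) (A B : Submodule ℂ (D k))
    (hABinf : A ⊓ B = ⊥) (hABsup : A ⊔ B = ⊤)
    (hA : ∀ x ∈ A, i k x ∈ A) (hB : ∀ x ∈ B, i k x ∈ B)
    (hnil : ∀ x ∈ A, ((i k) ^ m) x = 0)
    (hinj : ∀ x ∈ B, i k x = 0 → x = 0) :
    ∀ r : ℕ, m ≤ r → ∀ (x : E k) (y : D k), ((i k) ^ r) y = l k x →
      l k x = 0 ∧ ((i k) ^ r) y = 0 ∧
      j k y ∈ (LinearMap.ker ((i k) ^ r)).map (j k) := by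
  intro r hmr x y hxy
  exact exact_couple_degeneration_general (j k) (LinearMap.range_le_ker_iff.mp (hli k).le)
    (codisjoint_iff.mpr hABsup) hnil hB (LinearMap.disjoint_ker.mpr hinj) hmr hxy
end
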